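/- arXiv:2309.04603 — 9 statements merged into one kernel-verified Lean document; each statement's English description precedes it below -/
import Mathlib

section
/- There exists a 5-uniform hypergraph H on 8 vertices such that H has no polychromatic 3-coloring, but every 3-heavy restricted subhypergraph of H is 2-colorable. -/
/-!
Work with complements: the edges are the sets `V \ t` for `t` in a family `T` of 13 triples in
`V = {0, …, 7}`.

* The triples cover every pair of points. In any 3-coloring of 8 points some color class has at
  most two points, hence lies in a triple `t ∈ T`, and the edge `V \ t` misses that color.
* For every `X ⊆ V` there is a set `A ⊆ X` with `⌊|X| / 2⌋` points such that every edge meeting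
  `X` in at least three points meets both `A` and `X \ A`. One 2-coloring of `X` thus serves all
  3-heavy subfamilies of the trace on `X` at once. This is a finite check over the 256 sets `X`.
  It amounts to the following properties of `T`: every 6-set splits into two triples outside `T`,
  every 7-set contains a triple outside `T`, and every 5-set `Y` contains a pair such that all
  triples of `T` through that pair lie inside `Y`.
-/

/-- A family of triples in `{0, …, 7}` covering all pairs; the edges are their complements. -/
def coTriples : Finset (Finset ℕ) :=
  {{0, 6, 7}, {3, 5, 7}, {2, 4, 6}, {1, 3, 4}, {3, 4, 7}, {1, 5, 6}, {3, 6, 7}, {0, 1, 6},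
    {0, 3, 4}, {1, 2, 7}, {0, 4, 5}, {2, 3, 5}, {0, 1, 2}}

/-- The 5-uniform hypergraph on `{0, …, 7}` whose edges are the complements of `coTriples`. -/
def coEdges : Finset (Finset ℕ) :=
  coTriples.image (Finset.range 8 \ ·)

lemma coEdges_uniform : ∀ e ∈ coEdges, e ⊆ Finset.range 8 ∧ e.card = 5 := by
  decide +kernel

lemma coEdges_avoid_pair : ∀ x ∈ Finset.range 8, ∀ y ∈ Finset.range 8,
    ∃ e ∈ coEdges, x ∉ e ∧ y ∉ e := by
  decide +kernel

/-- Every small set is avoided by some edge, because it lies in a triple of `coTriples`. -/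
lemma coEdges_avoid {S : Finset ℕ} (hS : S ⊆ Finset.range 8) (hc : S.card ≤ 2) :
    ∃ e ∈ coEdges, ∀ v ∈ S, v ∉ e := by
  obtain ⟨x, y, hx, hy, hxy⟩ : ∃ x y, x ∈ Finset.range 8 ∧ y ∈ Finset.range 8 ∧
      ∀ v ∈ S, v = x ∨ v = y := by
    have h : S.card = 0 ∨ S.card = 1 ∨ S.card = 2 := by omega
    rcases h with h | h | h
    · rw [Finset.card_eq_zero] at h
      exact ⟨0, 0, by simp, by simp, by simp [h]⟩
    · obtain ⟨a, rfl⟩ := Finset.card_eq_one.mp h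
      exact ⟨a, a, hS (by simp), hS (by simp), by simp⟩
    · obtain ⟨a, b, -, rfl⟩ := Finset.card_eq_two.mp h
      exact ⟨a, b, hS (by simp), hS (by simp), by simp⟩
  obtain ⟨e, he, hex, hey⟩ := coEdges_avoid_pair x hx y hy
  refine ⟨e, he, fun v hv => ?_⟩
  rcases hxy v hv with rfl | rfl <;> assumption

/-- Each `X` has a balanced splitting into `A` and `X \ A` that is proper for all edges of the
trace on `X` with at least three points. -/
lemma coEdges_split : ∀ X ∈ (Finset.range 8).powerset, ∃ A ∈ X.powersetCard (X.card / 2),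
    ∀ e ∈ coEdges, 3 ≤ (e ∩ X).card →
      (∃ v ∈ e ∩ X, v ∈ A) ∧ (∃ v ∈ e ∩ X, v ∉ A) := by
  decide +kernel

/-- There exists a 5-uniform hypergraph on 8 vertices that has no polychromatic
3-coloring, but every 3-heavy restricted subhypergraph of it is 2-colorable. -/
theorem stmt_1 : ∃ (V : Finset ℕ) (E : Finset (Finset ℕ)),
    V.card = 8 ∧ (∀ e ∈ E, e ⊆ V ∧ e.card = 5) ∧
    (¬ ∃ c : ℕ → Fin 3, ∀ e ∈ E, ∀ i : Fin 3, ∃ v ∈ e, c v = i) ∧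
    (∀ X ⊆ V, ∀ E' ⊆ E.image (· ∩ X), (∀ f ∈ E', 3 ≤ f.card) →
      ∃ c : ℕ → Bool, ∀ f ∈ E', (∃ v ∈ f, c v = true) ∧ (∃ v ∈ f, c v = false)) := by
  refine ⟨Finset.range 8, coEdges, Finset.card_range 8, coEdges_uniform, ?_, ?_⟩
  · rintro ⟨c, hc⟩
    -- Pigeonhole: 8 < 3 * 3, so some color is used at most twice.
    obtain ⟨i, -, hi⟩ := Finset.exists_card_fiber_lt_of_card_lt_mul (s := Finset.range 8)
      (t := (Finset.univ : Finset (Fin 3))) (f := c) (n := 3) (by simp)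
    obtain ⟨e, he, hav⟩ := coEdges_avoid (Finset.filter_subset (fun v => c v = i) _)
      (Nat.lt_succ_iff.mp hi)
    obtain ⟨v, hv, hvi⟩ := hc e he i
    exact hav v (Finset.mem_filter.mpr ⟨(coEdges_uniform e he).1 hv, hvi⟩) hv
  · intro X hX E' hE' h3
    obtain ⟨A, -, hA⟩ := coEdges_split X (Finset.mem_powerset.mpr hX)
    refine ⟨fun v => decide (v ∈ A), fun f hf => ?_⟩
    obtain ⟨e, he, rfl⟩ := Finset.mem_image.mp (hE' hf)
    simpa only [decide_eq_true_eq, decide_eq_false_iff_not] using hA e he (h3 _ hf)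
end

section
/- Let H be the hypergraph on vertex set V = {1,…,8} with the eleven edges {4,5,6,7,8}, {2,3,5,6,8}, {2,3,4,7,8}, {1,3,5,7,8}, {1,3,4,6,8}, {1,2,6,7,8}, {1,2,4,5,8}, {3,4,5,6,7}, {1,2,4,5,7}, {1,2,3,5,6}, {2,3,4,6,7}. Then H has no polychromatic 3-coloring: for every coloring c : V → {1,2,3} there is an edge of H that misses one of the three colors. -/
/-!
A color is missed by an edge exactly when the edge is disjoint from the corresponding color class,
so a polychromatic 3-coloring partitions the eight vertices into three transversals of the
hypergraph. By pigeonhole one of three classes has at most two vertices, while no set of at most two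
vertices is a transversal (`exists_edge_disjoint`).
-/

/-- The vertex set `{1,…,8}` of the hypergraph from the paper. -/
def paperV : Finset ℕ := {1, 2, 3, 4, 5, 6, 7, 8}

/-- The eleven 5-element edges of the hypergraph from the paper. -/
def paperE : Finset (Finset ℕ) :=
  {{4,5,6,7,8}, {2,3,5,6,8}, {2,3,4,7,8}, {1,3,5,7,8}, {1,3,4,6,8}, {1,2,6,7,8},
   {1,2,4,5,8}, {3,4,5,6,7}, {1,2,4,5,7}, {1,2,3,5,6}, {2,3,4,6,7}}

/-- The hypergraph has no transversal with at most two vertices. -/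
theorem exists_edge_disjoint :
    ∀ S ∈ paperV.powerset, S.card ≤ 2 → ∃ e ∈ paperE, ∀ v ∈ e, v ∉ S := by
  decide +kernel

theorem edge_subset_vertices : ∀ e ∈ paperE, e ⊆ paperV := by
  decide

/-- The hypergraph from the paper has no polychromatic 3-coloring: every
3-coloring of the vertices has an edge missing one of the three colors. -/
theorem stmt_2 : ∀ c : ℕ → Fin 3, ∃ e ∈ paperE, ∃ i : Fin 3, ∀ v ∈ e, c v ≠ i := by
  intro c
  -- Pigeonhole: `8 < 3 * 3`, so some color is used on fewer than three vertices.
  obtain ⟨i, -, hi⟩ := Finset.exists_card_fiber_lt_of_card_lt_mul (s := paperV)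
    (t := (Finset.univ : Finset (Fin 3))) (f := c) (n := 3) (by decide)
  obtain ⟨e, he, hdisj⟩ := exists_edge_disjoint (paperV.filter fun v => c v = i)
    (Finset.mem_powerset.2 (Finset.filter_subset _ _)) (Nat.le_of_lt_succ hi)
  exact ⟨e, he, i, fun v hv hc =>
    hdisj v hv (Finset.mem_filter.2 ⟨edge_subset_vertices e he hv, hc⟩)⟩
end

section
/- Let H be the hypergraph on vertex set V = {1,…,8} with the eleven edges {4,5,6,7,8}, {2,3,5,6,8}, {2,3,4,7,8}, {1,3,5,7,8}, {1,3,4,6,8}, {1,2,6,7,8}, {1,2,4,5,8}, {3,4,5,6,7}, {1,2,4,5,7}, {1,2,3,5,6}, {2,3,4,6,7}. Then every 3-heavy restricted subhypergraph of H is 2-colorable: for every X ⊆ V and every collection E' of trace edges e ∩ X (e an edge of H) all of which have size at least 3, there is a coloring c : X → {0,1} such that every member of E' contains vertices of both colors. -/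
/-- The edges of `paperE`, as duplicate-free lists. -/
def edgeLists : List (List ℕ) :=
  [[4, 5, 6, 7, 8], [2, 3, 5, 6, 8], [2, 3, 4, 7, 8], [1, 3, 5, 7, 8], [1, 3, 4, 6, 8],
   [1, 2, 6, 7, 8], [1, 2, 4, 5, 8], [3, 4, 5, 6, 7], [1, 2, 4, 5, 7], [1, 2, 3, 5, 6],
   [2, 3, 4, 6, 7]]

/-- Five candidate classes of `true` vertices. They come from a greedy covering of the subsets `X`
of the vertex set by the colourings that are proper on the trace edges of size at least 3. -/
def colorClasses : List (List ℕ) :=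
  [[1, 2, 3, 4], [1, 4, 6, 7], [2, 3, 4, 5], [2, 4, 5, 6], [1, 3, 4, 7]]

/-- Boolean list membership, through `Nat.beq` so that the kernel evaluates it quickly. -/
def memList (l : List ℕ) (v : ℕ) : Bool := l.any (Nat.beq v)

theorem memList_iff (l : List ℕ) (v : ℕ) : memList l v = true ↔ v ∈ l := by
  simp [memList]

/-- The test that a trace edge `t` has at most two vertices or meets both colours, where `C` is the
class of `true` vertices. -/
def traceGood (t C : List ℕ) : Bool :=
  Nat.ble t.length 2 || (t.any (memList C) && t.any (fun v => !memList C v))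

theorem all_sublists_good :
    ([1, 2, 3, 4, 5, 6, 7, 8].sublists.all fun X => colorClasses.any fun C =>
      edgeLists.all fun l => traceGood (l.filter (memList X)) C) = true := by
  decide +kernel

theorem exists_edgeList : ∀ e ∈ paperE, ∃ l ∈ edgeLists, l.Nodup ∧ l.toFinset = e := by
  decide +kernel

theorem exists_colorClass (X : Finset ℕ) (hX : X ⊆ paperV) :
    ∃ C : List ℕ, ∀ e ∈ paperE, 3 ≤ (e ∩ X).card →
      (∃ v ∈ e ∩ X, v ∈ C) ∧ (∃ v ∈ e ∩ X, v ∉ C) := by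
  -- `L` lists the elements of `X` as a sublist of `1, …, 8`.
  set L : List ℕ := [1, 2, 3, 4, 5, 6, 7, 8].filter (· ∈ X) with hL
  have hmem : ∀ v, v ∈ L ↔ v ∈ X := fun v => by
    rw [hL, List.mem_filter, decide_eq_true_eq, and_iff_right_iff_imp]
    intro hv
    simpa [paperV] using hX hv
  have hall := List.all_eq_true.mp all_sublists_good L
    (List.mem_sublists.mpr List.filter_sublist)
  obtain ⟨C, -, hC⟩ := List.any_eq_true.mp hall
  refine ⟨C, fun e he hcard => ?_⟩
  obtain ⟨l, hl, hnd, rfl⟩ := exists_edgeList e he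
  have htrace : l.toFinset ∩ X = (l.filter (memList L)).toFinset := by
    ext v
    simp [memList_iff, hmem]
  rw [htrace] at hcard ⊢
  rw [List.toFinset_card_of_nodup (hnd.filter _)] at hcard
  have hgood := List.all_eq_true.mp hC l hl
  rw [traceGood, Bool.or_eq_true, Bool.and_eq_true, Nat.ble_eq, List.any_eq_true,
    List.any_eq_true] at hgood
  rcases hgood with hsmall | ⟨⟨v, hv, hvC⟩, w, hw, hwC⟩
  · omega
  · refine ⟨⟨v, List.mem_toFinset.mpr hv, (memList_iff C v).mp hvC⟩,
      w, List.mem_toFinset.mpr hw, fun h => ?_⟩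
    simp [(memList_iff C w).mpr h] at hwC

/-- Every 3-heavy restricted subhypergraph of the hypergraph from the paper is
2-colorable: for every `X ⊆ V` and every collection `E'` of trace edges `e ∩ X`
all of size at least 3, there is a 2-coloring in which every member of `E'`
contains both colors. -/
theorem stmt_3 : ∀ X ⊆ paperV, ∀ E' ⊆ paperE.image (· ∩ X),
    (∀ f ∈ E', 3 ≤ f.card) →
    ∃ c : ℕ → Bool, ∀ f ∈ E', (∃ v ∈ f, c v = true) ∧ (∃ v ∈ f, c v = false) := by
  intro X hX E' hE' hcard
  obtain ⟨C, hC⟩ := exists_colorClass X hX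
  refine ⟨fun v => decide (v ∈ C), fun f hf => ?_⟩
  obtain ⟨e, he, rfl⟩ := Finset.mem_image.mp (hE' hf)
  simpa only [decide_eq_true_eq, decide_eq_false_iff_not] using hC e he (hcard _ hf)
end

section
/- Let H be the hypergraph on vertex set V = {1,…,8} with the eleven edges {4,5,6,7,8}, {2,3,5,6,8}, {2,3,4,7,8}, {1,3,5,7,8}, {1,3,4,6,8}, {1,2,6,7,8}, {1,2,4,5,8}, {3,4,5,6,7}, {1,2,4,5,7}, {1,2,3,5,6}, {2,3,4,6,7}. Then every pair of distinct vertices of V is disjoint from at least one edge of H; consequently every 6-element subset of V contains an edge of H, so the independence number of H is at most 5. -/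
/-- In the hypergraph from the paper, every pair of distinct vertices is
disjoint from some edge; consequently every 6-element subset of the vertex set
contains an edge, so the independence number is at most 5. -/
theorem stmt_4 :
    (∀ u ∈ paperV, ∀ v ∈ paperV, u ≠ v → ∃ e ∈ paperE, Disjoint e ({u, v} : Finset ℕ)) ∧
    (∀ S ⊆ paperV, S.card = 6 → ∃ e ∈ paperE, e ⊆ S) ∧
    (∀ S ⊆ paperV, (∀ e ∈ paperE, ¬ e ⊆ S) → S.card ≤ 5) := by
  have hpair : ∀ u ∈ paperV, ∀ v ∈ paperV, u ≠ v →
      ∃ e ∈ paperE, Disjoint e ({u, v} : Finset ℕ) := by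
    decide
  have hedge : ∀ e ∈ paperE, e ⊆ paperV := by decide
  have hsix : ∀ S ⊆ paperV, S.card = 6 → ∃ e ∈ paperE, e ⊆ S := by
    intro S hS hcard
    have hcompl : (paperV \ S).card = 2 := by
      rw [Finset.card_sdiff_of_subset hS, hcard]
      rfl
    obtain ⟨u, v, huv, heq⟩ := Finset.card_eq_two.mp hcompl
    have hu : u ∈ paperV \ S := by simp [heq]
    have hv : v ∈ paperV \ S := by simp [heq]
    obtain ⟨e, he, hdisj⟩ :=
      hpair u (Finset.mem_sdiff.mp hu).1 v (Finset.mem_sdiff.mp hv).1 huv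
    refine ⟨e, he, fun x hx => ?_⟩
    by_contra hxS
    have hmem : x ∈ paperV \ S := Finset.mem_sdiff.mpr ⟨hedge e he hx, hxS⟩
    rw [heq] at hmem
    exact Finset.disjoint_left.mp hdisj hx hmem
  refine ⟨hpair, hsix, fun S hS hind => ?_⟩
  by_contra hcard
  obtain ⟨T, hTS, hT⟩ := Finset.exists_subset_card_eq (show 6 ≤ S.card by omega)
  obtain ⟨e, he, heT⟩ := hsix T (hTS.trans hS) hT
  exact hind e he (heT.trans hTS)
end

section
/- Let k ≥ 2 and d ≥ 1 be integers and let H = (V, E) be a finite hypergraph whose VC-dimension is at least kd − 1, i.e., H shatters some set S ⊆ V with |S| = kd − 1. Then H has a ((k−1)d)-heavy restricted subhypergraph that admits no polychromatic k-coloring; namely, the hypergraph on S whose edges are all ((k−1)d)-element subsets of S is a restricted subhypergraph of H (each such subset arises as e ∩ S for some edge e, by shattering) and it has no polychromatic k-coloring. -/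
/-! The first claim is shattering itself. For the second, any `k`-coloring of the
`k * d - 1` vertices of `S` has, by pigeonhole, a color `i` used at most `d - 1` times;
the remaining vertices number at least `(k - 1) * d`, so they contain an edge without `i`. -/

/-- If a finite hypergraph `(V, E)` shatters a set `S` with `|S| = kd - 1`
(`k ≥ 2`, `d ≥ 1`), then the complete `((k-1)d)`-uniform hypergraph on `S` is a
restricted subhypergraph of `(V, E)` (each `((k-1)d)`-subset of `S` arises as
`e ∩ S` for some edge `e`), and it admits no polychromatic `k`-coloring. -/
theorem stmt_6 {α : Type*} [DecidableEq α] (k d : ℕ) (hk : 2 ≤ k) (hd : 1 ≤ d)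
    (V : Finset α) (E : Finset (Finset α)) (hE : ∀ e ∈ E, e ⊆ V)
    (S : Finset α) (hS : S ⊆ V) (hScard : S.card = k * d - 1)
    (hshatter : ∀ B ⊆ S, ∃ e ∈ E, e ∩ S = B) :
    (∀ f ∈ S.powersetCard ((k - 1) * d), ∃ e ∈ E, e ∩ S = f) ∧
    ¬ ∃ c : α → Fin k, ∀ e ∈ S.powersetCard ((k - 1) * d), ∀ i : Fin k, ∃ v ∈ e, c v = i := by
  refine ⟨fun f hf => hshatter f (Finset.mem_powersetCard.1 hf).1, ?_⟩
  rintro ⟨c, hc⟩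
  have hkd : 1 ≤ k * d := Nat.mul_pos (by omega) hd
  -- Since `|S| < k * d`, some color `i` is used fewer than `d` times on `S`.
  obtain ⟨i, -, hi⟩ := Finset.exists_card_fiber_lt_of_card_lt_mul
    (s := S) (t := Finset.univ) (f := c) (n := d) (by simp; omega)
  have hsplit := Finset.card_filter_add_card_filter_not (s := S) (fun x => c x = i)
  have hmul : (k - 1) * d + d = k * d := by
    rw [← Nat.succ_mul, Nat.succ_eq_add_one, Nat.sub_add_cancel (by omega)]
  -- Hence at least `(k - 1) * d` vertices of `S` avoid `i`, enough to hold an edge missing `i`.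
  obtain ⟨e, he, hecard⟩ := Finset.exists_subset_card_eq
    (s := S.filter fun x => ¬ c x = i) (n := (k - 1) * d) (by omega)
  obtain ⟨v, hv, hvi⟩ := hc e
    (Finset.mem_powersetCard.2 ⟨he.trans (Finset.filter_subset _ _), hecard⟩) i
  exact (Finset.mem_filter.1 (he hv)).2 hvi
end

section
/- Let k ≥ 2 be an integer and let H = (V, E) be a finite hypergraph that shatters a set S ⊆ V of size s, where d := ⌊(s+1)/k⌋ ≥ 1. Then H has a ((k−1)·⌊(s+1)/k⌋)-heavy restricted subhypergraph that admits no polychromatic k-coloring. -/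
/-!
The restricted subhypergraph consists of all subsets of `S` with at least `(k - 1) * d` elements,
where `d = (s + 1) / k`; every one of them is a trace on `S`, as `S` is shattered. Given a
`k`-coloring, the pigeonhole principle yields a color used at most `s / k` times on `S`. The
vertices of `S` not having this color form a set of at least `s - s / k ≥ (k - 1) * d` elements,
hence an edge, and this edge misses the color.
-/

/-- If a finite hypergraph `(V, E)` shatters a set `S` of size `s` with
`⌊(s+1)/k⌋ ≥ 1` (`k ≥ 2`), then it has a `((k-1)·⌊(s+1)/k⌋)`-heavy restricted
subhypergraph (edges drawn from the trace on some `X ⊆ V`) admitting no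
polychromatic `k`-coloring. -/
theorem stmt_7 {α : Type*} [DecidableEq α] (k : ℕ) (hk : 2 ≤ k)
    (V : Finset α) (E : Finset (Finset α)) (hE : ∀ e ∈ E, e ⊆ V)
    (S : Finset α) (hS : S ⊆ V) (s : ℕ) (hScard : S.card = s)
    (hd : 1 ≤ (s + 1) / k)
    (hshatter : ∀ B ⊆ S, ∃ e ∈ E, e ∩ S = B) :
    ∃ (X : Finset α) (E' : Finset (Finset α)), X ⊆ V ∧
      (∀ f ∈ E', ∃ e ∈ E, e ∩ X = f) ∧
      (∀ f ∈ E', (k - 1) * ((s + 1) / k) ≤ f.card) ∧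
      ¬ ∃ c : α → Fin k, ∀ f ∈ E', ∀ i : Fin k, ∃ v ∈ f, c v = i := by
  refine ⟨S, S.powerset.filter (fun f => (k - 1) * ((s + 1) / k) ≤ f.card), hS, ?_, ?_, ?_⟩
  · intro f hf
    exact hshatter f (Finset.mem_powerset.1 (Finset.mem_filter.1 hf).1)
  · intro f hf
    exact (Finset.mem_filter.1 hf).2
  rintro ⟨c, hc⟩
  obtain ⟨i, -, hi⟩ : ∃ i ∈ (Finset.univ : Finset (Fin k)),
      (S.filter (fun v => c v = i)).card < s / k + 1 := by
    apply Finset.exists_card_fiber_lt_of_card_lt_mul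
    rw [Finset.card_univ, Fintype.card_fin, hScard]
    exact Nat.lt_mul_div_succ s (by omega)
  have hsplit := Finset.card_filter_add_card_filter_not (s := S) (fun v => c v = i)
  have hbound : (k - 1) * ((s + 1) / k) + s / k ≤ s := by
    have h1 := Nat.div_mul_le_self (s + 1) k
    have h2 := Nat.div_mul_le_self s k
    obtain ⟨m, rfl⟩ : ∃ m, k = m + 1 := ⟨k - 1, by omega⟩
    generalize (s + 1) / (m + 1) = d at *
    generalize s / (m + 1) = q at *
    rw [Nat.add_sub_cancel]
    -- For `q < d` the bound comes from `k * d ≤ s + 1`, for `d ≤ q` from `k * q ≤ s`.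
    rcases lt_or_ge q d with h | h
    · nlinarith
    · nlinarith [Nat.mul_le_mul_left m h]
  obtain ⟨v, hv, hvi⟩ := hc (S.filter (fun v => ¬ c v = i)) (by
    rw [Finset.mem_filter, Finset.mem_powerset]
    exact ⟨Finset.filter_subset _ _, by omega⟩) i
  exact (Finset.mem_filter.1 hv).2 hvi
end

section
/- Let H be a 5-uniform hypergraph on a vertex set V of 8 vertices such that every pair of distinct vertices of V is disjoint from at least one edge of H. Then H has at least 11 edges. -/
/-!
Passing to complements in `V`, the claim is that covering all pairs of an 8-set by triples takes
at least 11 triples; this is the Schönheim bound `⌈8/3 · ⌈7/2⌉⌉ = 11`. Each vertex `v` lies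
in at least 4 complements, since each of these covers only 2 of the 7 other vertices
(`four_le_card_missing`). Counting pairs (vertex, edge missing it) in two ways gives
`8 · 4 ≤ 3 · |E|`, hence `|E| ≥ 11`.
-/

theorem four_le_card_missing {α : Type*} [DecidableEq α] (V : Finset α) (hV : V.card = 8)
    (E : Finset (Finset α)) (hE : ∀ e ∈ E, e ⊆ V ∧ e.card = 5)
    (hmiss : ∀ u ∈ V, ∀ v ∈ V, u ≠ v → ∃ e ∈ E, Disjoint e ({u, v} : Finset α))
    (v : α) (hv : v ∈ V) : 4 ≤ (E.filter (fun e => v ∉ e)).card := by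
  have hcover : V.erase v ⊆ (E.filter (fun e => v ∉ e)).biUnion (fun e => (V \ e).erase v) := by
    intro u hu
    obtain ⟨huv, huV⟩ := Finset.mem_erase.mp hu
    obtain ⟨e, he, hd⟩ := hmiss u huV v hv huv
    simp only [Finset.disjoint_insert_right, Finset.disjoint_singleton_right] at hd
    simp only [Finset.mem_biUnion, Finset.mem_filter, Finset.mem_erase, Finset.mem_sdiff]
    exact ⟨e, ⟨he, hd.2⟩, huv, huV, hd.1⟩
  have hcard := (Finset.card_le_card hcover).trans
    (Finset.card_biUnion_le_card_mul _ _ 2 (by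
      intro e he
      obtain ⟨heE, hve⟩ := Finset.mem_filter.mp he
      rw [Finset.card_erase_of_mem (Finset.mem_sdiff.mpr ⟨hv, hve⟩),
        Finset.card_sdiff_of_subset (hE e heE).1, hV, (hE e heE).2]))
  rw [Finset.card_erase_of_mem hv, hV] at hcard
  omega

/-- A 5-uniform hypergraph on 8 vertices in which every pair of distinct
vertices is disjoint from at least one edge has at least 11 edges. -/
theorem stmt_9 {α : Type*} [DecidableEq α] (V : Finset α) (hV : V.card = 8)
    (E : Finset (Finset α)) (hE : ∀ e ∈ E, e ⊆ V ∧ e.card = 5)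
    (hmiss : ∀ u ∈ V, ∀ v ∈ V, u ≠ v → ∃ e ∈ E, Disjoint e ({u, v} : Finset α)) :
    11 ≤ E.card := by
  have hcount := Finset.card_mul_le_card_mul (s := V) (t := E) (m := 4) (n := 3)
    (fun v e => v ∉ e)
    (fun v hv => four_le_card_missing V hV E hE hmiss v hv)
    (by
      intro e he
      have hcompl : Finset.bipartiteBelow (fun v e => v ∉ e) V e = V \ e := by
        ext x
        simp [Finset.bipartiteBelow]
      rw [hcompl, Finset.card_sdiff_of_subset (hE e he).1, hV, (hE e he).2])
  omega
end

section
/- Let H be a 5-uniform hypergraph on a vertex set V of 8 vertices such that every pair of distinct vertices of V is disjoint from at least one edge of H. Then for every vertex v ∈ V there exists a pair {v, w} (w ≠ v) that is disjoint from at least two distinct edges of H. -/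
/-! Fix `v` and suppose no pair `{v, w}` is missed by two distinct edges. Then each of the seven
vertices `w ≠ v` is missed by exactly one edge of the family `F` of edges not containing `v`.
Every edge of `F` misses exactly two vertices other than `v`, because its complement has three
elements, one of which is `v`. Counting the pairs `(w, e)` with `e ∈ F`, `w ≠ v` and `w ∉ e`
in both ways gives `7 = 2 * |F|`, which is impossible by parity. -/

/-- In a 5-uniform hypergraph on 8 vertices in which every pair of distinct
vertices is disjoint from at least one edge, every vertex `v` belongs to some
pair `{v, w}` that is disjoint from at least two distinct edges. -/
theorem stmt_10 {α : Type*} [DecidableEq α] (V : Finset α) (hV : V.card = 8)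
    (E : Finset (Finset α)) (hE : ∀ e ∈ E, e ⊆ V ∧ e.card = 5)
    (hmiss : ∀ u ∈ V, ∀ v ∈ V, u ≠ v → ∃ e ∈ E, Disjoint e ({u, v} : Finset α)) :
    ∀ v ∈ V, ∃ w ∈ V, w ≠ v ∧ ∃ e₁ ∈ E, ∃ e₂ ∈ E, e₁ ≠ e₂ ∧
      Disjoint e₁ ({v, w} : Finset α) ∧ Disjoint e₂ ({v, w} : Finset α) := by
  intro v hv
  by_contra hcon
  push Not at hcon
  have key := Finset.sum_card_bipartiteAbove_eq_sum_card_bipartiteBelow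
    (s := V.erase v) (t := E.filter (fun e => v ∉ e)) (fun w e => w ∉ e)
  have hone : ∀ w ∈ V.erase v,
      ((E.filter (fun e => v ∉ e)).bipartiteAbove (fun w e => w ∉ e) w).card = 1 := by
    intro w hw
    obtain ⟨hwv, hwV⟩ := Finset.mem_erase.mp hw
    obtain ⟨e, he, hd⟩ := hmiss v hv w hwV hwv.symm
    rw [Finset.card_eq_one]
    refine ⟨e, Finset.eq_singleton_iff_unique_mem.mpr ⟨?_, ?_⟩⟩
    · simp only [Finset.disjoint_insert_right, Finset.disjoint_singleton_right] at hd
      simp [Finset.bipartiteAbove, he, hd]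
    · intro e' he'
      simp only [Finset.bipartiteAbove, Finset.mem_filter] at he'
      by_contra hne
      refine hcon w hwV hwv e he e' he'.1.1 (Ne.symm hne) hd ?_
      simp [Finset.disjoint_insert_right, he'.1.2, he'.2]
  have htwo : ∀ e ∈ E.filter (fun e => v ∉ e),
      ((V.erase v).bipartiteBelow (fun w e => w ∉ e) e).card = 2 := by
    intro e he
    obtain ⟨heE, hve⟩ := Finset.mem_filter.mp he
    obtain ⟨hsub, hcard⟩ := hE e heE
    have hset : (V.erase v).bipartiteBelow (fun w e => w ∉ e) e = (V \ e).erase v := by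
      ext w
      simp only [Finset.bipartiteBelow, Finset.mem_filter, Finset.mem_erase, Finset.mem_sdiff]
      tauto
    rw [hset, Finset.card_erase_of_mem (Finset.mem_sdiff.mpr ⟨hv, hve⟩),
      Finset.card_sdiff_of_subset hsub, hV, hcard]
  rw [Finset.sum_congr rfl hone, Finset.sum_congr rfl htwo] at key
  simp only [Finset.sum_const, smul_eq_mul, Finset.card_erase_of_mem hv, hV] at key
  omega
end

section
/- Let H be a 5-uniform hypergraph on a vertex set of 7 vertices. If every 3-heavy restricted subhypergraph of H is 2-colorable, then H admits a polychromatic 3-coloring. In other words, there is no 5-uniform hypergraph on 7 vertices that has no polychromatic 3-coloring while all of its 3-heavy restricted subhypergraphs are 2-colorable. -/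
/-!
Every edge is `V \ p` for a pair `p`; call a pair `p` *free* if `V \ p` is not an edge.

If there are two disjoint free pairs `p`, `q`, then the classes `p`, `q`, `V \ (p ∪ q)` form a
polychromatic 3-coloring: a 5-set missing `p` (or `q`) is its complement, which is not an edge, and
a 5-set cannot be contained in the 4-set `p ∪ q`.

Otherwise there is a pair `p` (a free one if one exists, any pair if not) such that no pair inside
the 5-set `X = V \ p` is free. Then every 3-subset of `X` is the trace on `X` of an edge, and the
hypergraph of all 3-subsets of a 5-set is not 2-colorable by the pigeonhole principle.
-/

/-- Every edge meets a free pair `p`: a 5-subset of the 7-set `V` avoiding `p` would equal `V \ p`. -/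
lemma exists_mem_of_free_pair {α : Type*} [DecidableEq α] {V p e : Finset α} {E : Finset (Finset α)}
    (hV : V.card = 7) (hp : p ⊆ V) (hpc : p.card = 2) (hfree : V \ p ∉ E)
    (he : e ∈ E) (heV : e ⊆ V) (hec : e.card = 5) : ∃ v ∈ e, v ∈ p := by
  by_contra! hcon
  have hsub : e ⊆ V \ p := fun v hv => Finset.mem_sdiff.2 ⟨heV hv, hcon v hv⟩
  have hcard : (V \ p).card = 5 := by rw [Finset.card_sdiff_of_subset hp]; omega
  exact hfree (Finset.eq_of_subset_of_card_le hsub (by omega) ▸ he)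

/-- There is no 5-uniform hypergraph on 7 vertices without a polychromatic
3-coloring all of whose 3-heavy restricted subhypergraphs are 2-colorable:
if every 3-heavy restricted subhypergraph of such a hypergraph is 2-colorable,
then the hypergraph admits a polychromatic 3-coloring. -/
theorem stmt_11 {α : Type*} [DecidableEq α] (V : Finset α) (hV : V.card = 7)
    (E : Finset (Finset α)) (hE : ∀ e ∈ E, e ⊆ V ∧ e.card = 5)
    (h2col : ∀ X ⊆ V, ∀ E' ⊆ E.image (· ∩ X), (∀ f ∈ E', 3 ≤ f.card) →
      ∃ c : α → Bool, ∀ f ∈ E', (∃ v ∈ f, c v = true) ∧ (∃ v ∈ f, c v = false)) :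
    ∃ c : α → Fin 3, ∀ e ∈ E, ∀ i : Fin 3, ∃ v ∈ e, c v = i := by
  by_cases h : ∃ p q : Finset α, p ⊆ V ∧ q ⊆ V ∧ p.card = 2 ∧ q.card = 2 ∧ Disjoint p q ∧
      V \ p ∉ E ∧ V \ q ∉ E
  · obtain ⟨p, q, hp, hq, hpc, hqc, hpq, hpE, hqE⟩ := h
    refine ⟨fun v => if v ∈ p then 0 else if v ∈ q then 1 else 2, fun e he i => ?_⟩
    obtain ⟨heV, hec⟩ := hE e he
    fin_cases i
    · obtain ⟨v, hve, hvp⟩ := exists_mem_of_free_pair hV hp hpc hpE he heV hec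
      exact ⟨v, hve, by simp [hvp]⟩
    · obtain ⟨v, hve, hvq⟩ := exists_mem_of_free_pair hV hq hqc hqE he heV hec
      exact ⟨v, hve, by simp [hvq, Finset.disjoint_right.1 hpq hvq]⟩
    · have hlt : (p ∪ q).card < e.card := by
        have := Finset.card_union_le p q
        omega
      obtain ⟨v, hve, hv⟩ := Finset.exists_mem_notMem_of_card_lt_card hlt
      rw [Finset.mem_union, not_or] at hv
      exact ⟨v, hve, by simp [hv.1, hv.2]⟩
  · exfalso
    obtain ⟨p, hp, hpc, hfull⟩ : ∃ p ⊆ V, p.card = 2 ∧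
        ∀ q ⊆ V \ p, q.card = 2 → V \ q ∈ E := by
      by_cases hfree : ∃ p ⊆ V, p.card = 2 ∧ V \ p ∉ E
      · obtain ⟨p, hp, hpc, hpE⟩ := hfree
        refine ⟨p, hp, hpc, fun q hq hqc => ?_⟩
        by_contra hqE
        exact h ⟨p, q, hp, hq.trans Finset.sdiff_subset, hpc, hqc,
          (Finset.disjoint_of_subset_left hq Finset.sdiff_disjoint).symm, hpE, hqE⟩
      · push Not at hfree
        obtain ⟨p, hp, hpc⟩ := Finset.exists_subset_card_eq (show 2 ≤ V.card by omega)
        exact ⟨p, hp, hpc, fun q hq => hfree q (hq.trans Finset.sdiff_subset)⟩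
    have hXV : V \ p ⊆ V := Finset.sdiff_subset
    have hXc : (V \ p).card = 5 := by rw [Finset.card_sdiff_of_subset hp]; omega
    generalize V \ p = X at hfull hXV hXc
    obtain ⟨c, hc⟩ := h2col X hXV (Finset.powersetCard 3 X) (by
      intro f hf
      obtain ⟨hfX, hfc⟩ := Finset.mem_powersetCard.1 hf
      -- The 3-set `f` is the trace of the edge obtained by removing the pair `X \ f`.
      refine Finset.mem_image.2 ⟨V \ (X \ f), hfull _ Finset.sdiff_subset ?_, ?_⟩
      · rw [Finset.card_sdiff_of_subset hfX]; omega
      · ext v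
        have := @hfX v
        have := @hXV v
        simp only [Finset.mem_inter, Finset.mem_sdiff]
        tauto) (fun f hf => (Finset.mem_powersetCard.1 hf).2.ge)
    have hmono : ∀ b : Bool, (X.filter (fun v => c v = b)).card < 3 := by
      intro b
      by_contra! hb
      obtain ⟨f, hf, hfc⟩ := Finset.exists_subset_card_eq hb
      obtain ⟨⟨v, hv, hvt⟩, w, hw, hwf⟩ := hc f
        (Finset.mem_powersetCard.2 ⟨hf.trans (Finset.filter_subset _ _), hfc⟩)
      have h1 := (Finset.mem_filter.1 (hf hv)).2
      have h2 := (Finset.mem_filter.1 (hf hw)).2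
      simp_all
    have hsum := Finset.card_filter_add_card_filter_not (s := X) (fun v => c v = true)
    simp only [Bool.not_eq_true] at hsum
    have := hmono true
    have := hmono false
    omega
end
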